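/- Neumann boundary value problem: Let f : Σ_N^+ → ℝ be continuous and let ξ : V_0 → ℝ satisfy ξ(p) = ∫_{[p_1]} f dμ for every constant sequence p = (ṗ_1) ∈ V_0. Then there exists u ∈ D_0 such that Δu = f and the Neumann derivative satisfies (du)(p) = ξ(p) for every p ∈ V_0. -/

import Mathlib

open Filter Topology MeasureTheory Finset Classical

noncomputable section

/-- The one-sided full shift space `Σ_N^+` on `N` symbols; coordinates are indexed
from `0`, so the paper's `x_1 x_2 ⋯` is `x 0, x 1, ⋯` here. It carries the product
of the discrete topology on `Fin N`. -/
abbrev SSp (N : ℕ) : Type := ℕ → Fin N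

/-- The level-`m` vertex set `V_m = {p : p_i = p_{i+1} for all i ≥ m+1}` (1-based),
i.e. the sequences that are constant from (0-based) coordinate `m` on.  It is
realized as a `Finset` via the parametrization by the first `m+1` coordinates;
see `mem_V` for the defining property. -/
noncomputable def V (N m : ℕ) : Finset (SSp N) :=
  (Finset.univ : Finset (Fin (m + 1) → Fin N)).image
    (fun w j => w ⟨min j m, by omega⟩)

lemma const_from (N m : ℕ) (p : SSp N) (h : ∀ i, m ≤ i → p i = p (i + 1)) :
    ∀ j, m ≤ j → p j = p m := by
  intro j hj
  induction j with
  | zero => have : m = 0 := by omega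
            simp [this]
  | succ k ih =>
      rcases Nat.lt_or_ge k m with hk | hk
      · have : m = k + 1 := by omega
        simp [this]
      · rw [← h k hk]
        exact ih hk

/-- Membership in `V N m` is exactly the paper's condition
`p_i = p_{i+1}` for all `i ≥ m+1` (1-based), i.e. `p i = p (i+1)` for all `i ≥ m`. -/
lemma mem_V {N m : ℕ} {p : SSp N} :
    p ∈ V N m ↔ ∀ i, m ≤ i → p i = p (i + 1) := by
  classical
  constructor
  · intro hp i hi
    simp only [V, Finset.mem_image] at hp
    obtain ⟨w, -, rfl⟩ := hp
    have h1 : min i m = m := by omega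
    have h2 : min (i + 1) m = m := by omega
    simp [h1, h2]
  · intro h
    simp only [V, Finset.mem_image]
    refine ⟨fun j => p j, Finset.mem_univ _, ?_⟩
    funext j
    rcases Nat.lt_or_ge j m with hj | hj
    · have : min j m = j := by omega
      simp [this]
    · have : min j m = m := by omega
      simp only [this]
      exact (const_from N m p h j hj).symm

/-- The deleted neighbourhood `U_{p,m} = {q ∈ V_m : q ≠ p, q_i = p_i for 1 ≤ i ≤ m}`
(1-based), i.e. `q` agrees with `p` on the first `m` (0-based: `i < m`) coordinates. -/
noncomputable def U (N m : ℕ) (p : SSp N) : Finset (SSp N) :=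
  (V N m).filter (fun q => q ≠ p ∧ ∀ i, i < m → q i = p i)

/-- `κ_p = min {j : p ∈ V_j}`. -/
noncomputable def kappa (N : ℕ) (p : SSp N) : ℕ := sInf {j | p ∈ V N j}

/-- The difference operator
`H_m u (p) = Σ_{i = κ_p}^{m} Σ_{q ∈ U_{p,i}} (u(q) − u(p))`. -/
noncomputable def H (N m : ℕ) (u : SSp N → ℝ) (p : SSp N) : ℝ :=
  ∑ i ∈ Finset.Icc (kappa N p) m, ∑ q ∈ U N i p, (u q - u p)

/-- The Dirichlet form `E_{H_m}(u, v) = − Σ_{p ∈ V_m} u(p) · H_m v(p)`. -/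
noncomputable def EH (N m : ℕ) (u v : SSp N → ℝ) : ℝ :=
  -∑ p ∈ V N m, u p * H N m v p

/-- The cylinder set `[p_1 ⋯ p_m]`, determined by the first `m` coordinates of `p`. -/
def cyl (N m : ℕ) (p : SSp N) : Set (SSp N) := {x | ∀ i, i < m → x i = p i}

/-- `χ_p^m` : the indicator function of the cylinder set `[p_1 ⋯ p_{m+1}]`. -/
noncomputable def chi (N m : ℕ) (p : SSp N) : SSp N → ℝ :=
  (cyl N (m + 1) p).indicator 1

/-- `u ∈ dom E`: `u` is continuous and the energy
`E(u) = lim_m E_{H_m}(u|_{V_m})` exists (and is finite). -/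
def MemDomE (N : ℕ) (u : SSp N → ℝ) : Prop :=
  Continuous u ∧ ∃ L : ℝ, Tendsto (fun m => EH N m u u) atTop (nhds L)

/-- `v ∈ dom_M E`: `v` has finite energy and vanishes on the boundary `V_M`. -/
def MemDomME (N M : ℕ) (v : SSp N → ℝ) : Prop :=
  MemDomE N v ∧ ∀ p ∈ V N M, v p = 0

/-- `u ∈ 𝒟_M` with `Δ u = f` (strong formulation with boundary `V_M`):
`u` and `f` are continuous and
`lim_{m → ∞} max_{p ∈ V_m ∖ V_M} |N^{m+1} H_m u(p) − f(p)| = 0`. -/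
def IsLaplacianOn (N M : ℕ) (u f : SSp N → ℝ) : Prop :=
  Continuous u ∧ Continuous f ∧
    ∀ ε : ℝ, 0 < ε → ∃ m₀ : ℕ, ∀ m, m₀ ≤ m → ∀ p ∈ V N m, p ∉ V N M →
      |(N : ℝ) ^ (m + 1) * H N m u p - f p| < ε

/-- `u ∈ D_μ` with `Δ u = f` (original definition of the Laplacian):
`u` and `f` are continuous and
`lim_{m → ∞} max_{p ∈ V_m ∖ V_{m−1}} |N^{m+1} H_m u(p) − f(p)| = 0`
(the level is written `m+1` to avoid natural subtraction). -/
def IsLaplacianDmu (N : ℕ) (u f : SSp N → ℝ) : Prop :=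
  Continuous u ∧ Continuous f ∧
    ∀ ε : ℝ, 0 < ε → ∃ m₀ : ℕ, ∀ m, m₀ ≤ m → ∀ p ∈ V N (m + 1), p ∉ V N m →
      |(N : ℝ) ^ (m + 2) * H N (m + 1) u p - f p| < ε

/-- `μ` is the equidistributed Bernoulli measure:
`μ([p_1 ⋯ p_m]) = N^{−m}` for every cylinder set. -/
def IsBernoulli (N : ℕ) (μ : Measure (SSp N)) : Prop :=
  ∀ (m : ℕ) (p : SSp N), μ (cyl N m p) = (N : ENNReal)⁻¹ ^ m

/-- `ρ(x,y) = min {i : x_i ≠ y_i}` (1-based; `0`-based first disagreement plus one). -/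
noncomputable def rho (N : ℕ) (x y : SSp N) : ℕ := sInf {i | x i ≠ y i} + 1

/-- The matrix `(G_m)_{pq}`: `2/N` if `q = p`, `1/N` if `q ∈ U_{p,m}`, `0` otherwise. -/
noncomputable def Gmat (N m : ℕ) (p q : SSp N) : ℝ :=
  if q = p then 2 / N else if q ∈ U N m p then 1 / N else 0

/-- The Green's function
`g(x,y) = Σ_{m=1}^{ρ(x,y)−1} Σ_{r,s ∈ V_m ∖ V_{m−1}} (G_m)_{rs} χ_r^m(x) χ_s^m(y)`
for `ρ(x,y) > 1`, and `g(x,y) = 0` for `ρ(x,y) = 1` (the sum is then empty). -/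
noncomputable def greenFn (N : ℕ) (x y : SSp N) : ℝ :=
  ∑ m ∈ Finset.Icc 1 (rho N x y - 1),
    ∑ r ∈ (V N m).filter (fun r => r ∉ V N (m - 1)),
      ∑ s ∈ (V N m).filter (fun s => s ∉ V N (m - 1)),
        Gmat N m r s * chi N m r x * chi N m s y

/-- The Green's operator `G_μ f (x) = ∫_{Σ_N^+ ∖ {x}} g(x,y) f(y) dμ(y)`. -/
noncomputable def Gop (N : ℕ) (μ : Measure (SSp N)) (f : SSp N → ℝ) (x : SSp N) : ℝ :=
  ∫ y in ({x}ᶜ : Set (SSp N)), greenFn N x y * f y ∂μ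

/-! Let `F m p` be the integral of `f` over the cylinder of length `m` around `p`. A continuous `u`
solves the problem as soon as `H N m u p` is `F (m + 1) p` off `V N 0` and `F (m + 1) p - F 1 p` on
`V N 0`, because the averages of `f` over shrinking cylinders converge uniformly to `f` and
`F (m + 1) p` tends to `0`.

Such a `u` is built level by level. Passing from `V N k` to `V N (k + 1)` attaches to each old
vertex a complete graph on `N` vertices, the old one among them, and the level `k + 1` part of `H`
has to be `F (k + 2)` at the new vertices and `F (k + 2) - F (k + 1)` at the old one. These values
`g` sum to zero since `F` is additive, so on the complete graph they are the Laplacian of `-g / N`.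
Normalizing this function to vanish at the old vertex leaves the values of `u` on `V N k` unchanged;
since `F` decays summably, the sum over all levels converges to a continuous function. -/

lemma exists_forall_mem_cylinder_dist_lt {E : ℕ → Type*} [∀ n, TopologicalSpace (E n)]
    [∀ n, DiscreteTopology (E n)] [∀ n, CompactSpace (E n)] {α : Type*} [PseudoMetricSpace α]
    {f : (∀ n, E n) → α} (hf : Continuous f) {ε : ℝ} (hε : 0 < ε) :
    ∃ m₀, ∀ m ≥ m₀, ∀ x, ∀ y ∈ PiNat.cylinder x m, dist (f y) (f x) < ε := by
  let _ : MetricSpace (∀ n, E n) := PiNat.metricSpace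
  obtain ⟨δ, hδ, hfδ⟩ :=
    Metric.uniformContinuous_iff.1 (CompactSpace.uniformContinuous_of_continuous hf) ε hε
  obtain ⟨m₀, hm₀⟩ := exists_pow_lt_of_lt_one hδ (by norm_num : (1 / 2 : ℝ) < 1)
  refine ⟨m₀, fun m hm x y hy => hfδ (lt_of_le_of_lt ?_ hm₀)⟩
  exact PiNat.mem_cylinder_iff_dist_le.1 (PiNat.cylinder_anti x hm hy)

lemma continuous_of_dependsOn {ι : Type*} {X : ι → Type*} [∀ i, TopologicalSpace (X i)]
    [∀ i, DiscreteTopology (X i)] {Y : Type*} [TopologicalSpace Y] {f : (∀ i, X i) → Y}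
    {s : Set ι} (hs : s.Finite) (hf : DependsOn f s) : Continuous f := by
  refine continuous_iff_continuousAt.2 fun x => (continuousAt_const (y := f x)).congr ?_
  have hagree : ∀ᶠ y in 𝓝 x, ∀ i ∈ s, y i = x i := (eventually_all_finite hs).2 fun i _ =>
    (continuous_apply i).continuousAt.eventually_mem (mem_nhds_discrete.2 (Set.mem_singleton (x i)))
  filter_upwards [hagree] with y hy
  exact (hf hy).symm

section Vertices

variable {N m : ℕ} {p q : SSp N} {u : SSp N → ℝ}

/-- The sequence `p_0 ⋯ p_{m-1} c c c ⋯`. As `c` varies, these are the vertices of the complete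
graph attached to `p` at level `m`. -/
def constTail (m : ℕ) (p : SSp N) (c : Fin N) : SSp N := fun i => if i < m then p i else c

lemma constTail_of_lt {i : ℕ} (h : i < m) (p : SSp N) (c : Fin N) : constTail m p c i = p i :=
  if_pos h

lemma constTail_of_le {i : ℕ} (h : m ≤ i) (p : SSp N) (c : Fin N) : constTail m p c i = c :=
  if_neg h.not_gt

lemma constTail_constTail (m : ℕ) (p : SSp N) (c d : Fin N) :
    constTail m (constTail m p c) d = constTail m p d := by
  funext i
  simp only [constTail]
  split_ifs <;> rfl

lemma constTail_injective (m : ℕ) (p : SSp N) : Function.Injective (constTail m p) :=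
  fun c d h => by simpa [constTail] using congrFun h m

lemma constTail_mem_V (m : ℕ) (p : SSp N) (c : Fin N) : constTail m p c ∈ V N m :=
  mem_V.2 fun i hi => by rw [constTail_of_le hi, constTail_of_le (by omega)]

lemma constTail_eq_of_mem_V (hq : q ∈ V N m) (h : ∀ i < m, q i = p i) :
    constTail m p (q m) = q := by
  funext i
  rcases lt_or_ge i m with hi | hi
  · rw [constTail_of_lt hi, h i hi]
  · rw [constTail_of_le hi, const_from N m q (mem_V.1 hq) i hi]

lemma V_mono {n : ℕ} (h : m ≤ n) : V N m ⊆ V N n := fun _ hp =>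
  mem_V.2 fun i hi => mem_V.1 hp i (h.trans hi)

lemma mem_V_iff_of_mem_V_succ (hp : p ∈ V N (m + 1)) : p ∈ V N m ↔ p (m + 1) = p m := by
  refine ⟨fun h => (mem_V.1 h m le_rfl).symm, fun h => mem_V.2 fun i hi => ?_⟩
  rcases hi.eq_or_lt with rfl | hi
  · exact h.symm
  · exact mem_V.1 hp i hi

lemma U_eq_erase_image_constTail (m : ℕ) (p : SSp N) :
    U N m p = (univ.image (constTail m p)).erase p := by
  ext q
  simp only [U, mem_filter, mem_erase, mem_image, mem_univ, true_and]
  constructor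
  · rintro ⟨hq, hne, h⟩
    exact ⟨hne, q m, constTail_eq_of_mem_V hq h⟩
  · rintro ⟨hne, c, rfl⟩
    exact ⟨constTail_mem_V m p c, hne, fun i hi => constTail_of_lt hi p c⟩

lemma sum_U_sub (m : ℕ) (p : SSp N) (u : SSp N → ℝ) :
    ∑ q ∈ U N m p, (u q - u p) = ∑ c, (u (constTail m p c) - u p) := by
  rw [U_eq_erase_image_constTail, sum_erase (f := fun q => u q - u p) _ (sub_self _),
    sum_image (constTail_injective m p).injOn]

lemma kappa_le (hp : p ∈ V N m) : kappa N p ≤ m := Nat.sInf_le hp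

lemma mem_V_kappa (hp : p ∈ V N m) : p ∈ V N (kappa N p) :=
  Nat.sInf_mem (s := {j | p ∈ V N j}) ⟨m, hp⟩

lemma H_succ (hp : p ∈ V N (m + 1)) :
    H N (m + 1) u p = H N m u p + ∑ q ∈ U N (m + 1) p, (u q - u p) :=
  sum_Icc_succ_top (kappa_le hp) _

lemma H_eq_zero_of_notMem_V (hp : p ∈ V N (m + 1)) (h : p ∉ V N m) : H N m u p = 0 := by
  have hlt : m < kappa N p := not_le.1 fun hle => h (V_mono hle (mem_V_kappa hp))
  rw [H, Icc_eq_empty hlt.not_ge, sum_empty]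

end Vertices

section Potential

variable {N : ℕ}

/-- `F m p` is a signed mass of the cylinder `[p_0 ⋯ p_{m-1}]`: it depends on these coordinates
only, and it is additive when the cylinder is split according to its next coordinate. -/
structure IsCylinderMass (F : ℕ → SSp N → ℝ) : Prop where
  dependsOn : ∀ m, DependsOn (F m) (Set.Iio m)
  eq_sum : ∀ m p, F m p = ∑ c, F (m + 1) (constTail m p c)

/-- The value prescribed for the level `k + 1` part of `H`, so that the sum over all levels up to
`m` telescopes to `F (m + 1)`. For `x ∈ V N (k + 1)`, the condition `x (k + 1) = x k` singles out
the old vertices `x ∈ V N k`. -/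
def levelSource (F : ℕ → SSp N → ℝ) (k : ℕ) (x : SSp N) : ℝ :=
  F (k + 2) x - if x (k + 1) = x k then F (k + 1) x else 0

/-- The solution of the Poisson equation with right-hand side `levelSource F k` on the complete
graphs of level `k + 1`, normalized to vanish at the old vertex `constTail (k + 1) x (x k)`. -/
def levelPotential (F : ℕ → SSp N → ℝ) (k : ℕ) (x : SSp N) : ℝ :=
  (levelSource F k (constTail (k + 1) x (x k)) - levelSource F k x) / N

/-- The solution of the Neumann problem whose right-hand side has cylinder masses `F`. -/
def potential (F : ℕ → SSp N → ℝ) (x : SSp N) : ℝ := ∑' k, levelPotential F k x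

variable {F : ℕ → SSp N → ℝ} {k m : ℕ} {p : SSp N}

lemma levelPotential_eq_zero (hp : p ∈ V N k) : levelPotential F k p = 0 := by
  have hold : constTail (k + 1) p (p k) = p := by
    rw [mem_V.1 hp k le_rfl]
    exact constTail_eq_of_mem_V (V_mono k.le_succ hp) fun _ _ => rfl
  simp [levelPotential, hold]

lemma potential_eq_sum (hp : p ∈ V N m) :
    potential F p = ∑ k ∈ range m, levelPotential F k p :=
  tsum_eq_sum fun k hk => levelPotential_eq_zero (V_mono (by simpa using hk) hp)

lemma levelPotential_constTail_sub (F : ℕ → SSp N → ℝ) (k : ℕ) (p : SSp N) (c : Fin N) :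
    levelPotential F k (constTail (k + 1) p c) - levelPotential F k p
      = (levelSource F k p - levelSource F k (constTail (k + 1) p c)) / N := by
  rw [levelPotential, levelPotential, constTail_constTail, constTail_of_lt k.lt_succ_self]
  ring

namespace IsCylinderMass

lemma dependsOn_levelSource (hF : IsCylinderMass F) (k : ℕ) :
    DependsOn (levelSource F k) (Set.Iio (k + 2)) := by
  intro x y h
  have h' : ∀ i < k + 2, x i = y i := h
  rw [levelSource, levelSource, hF.dependsOn (k + 2) h, h' (k + 1) (by omega), h' k (by omega),
    hF.dependsOn (k + 1) fun i (hi : i < k + 1) => h' i (by omega)]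

lemma dependsOn_levelPotential (hF : IsCylinderMass F) (k : ℕ) :
    DependsOn (levelPotential F k) (Set.Iio (k + 2)) := by
  intro x y h
  have hold : constTail (k + 1) x (x k) = constTail (k + 1) y (y k) := by
    have h' : ∀ i < k + 2, x i = y i := h
    funext i
    simp only [constTail]
    split_ifs
    · exact h' i (by omega)
    · exact h' k (by omega)
  rw [levelPotential, levelPotential, hold, hF.dependsOn_levelSource k h]

lemma sum_levelSource_constTail (hF : IsCylinderMass F) (k : ℕ) (p : SSp N) :
    ∑ c, levelSource F k (constTail (k + 1) p c) = 0 := by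
  have hterm : ∀ c, levelSource F k (constTail (k + 1) p c)
      = F (k + 2) (constTail (k + 1) p c) - if c = p k then F (k + 1) p else 0 := fun c => by
    rw [levelSource, constTail_of_le le_rfl, constTail_of_lt k.lt_succ_self,
      hF.dependsOn (k + 1) fun i hi => constTail_of_lt hi p c]
  simp only [hterm, sum_sub_distrib, ← hF.eq_sum (k + 1) p, sum_ite_eq', mem_univ, if_true,
    sub_self]

lemma potential_constTail_sub (hF : IsCylinderMass F) (hp : p ∈ V N (k + 1)) (c : Fin N) :
    potential F (constTail (k + 1) p c) - potential F p
      = (levelSource F k p - levelSource F k (constTail (k + 1) p c)) / N := by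
  have hlower : ∑ j ∈ range k, levelPotential F j (constTail (k + 1) p c)
      = ∑ j ∈ range k, levelPotential F j p := by
    refine sum_congr rfl fun j hj => hF.dependsOn_levelPotential j fun i (hi : i < j + 2) => ?_
    have hjk : j < k := mem_range.1 hj
    exact constTail_of_lt (by omega) p c
  rw [potential_eq_sum hp, potential_eq_sum (constTail_mem_V _ p c), sum_range_succ,
    sum_range_succ, hlower, add_sub_add_left_eq_sub, levelPotential_constTail_sub]

lemma sum_U_potential_sub (hF : IsCylinderMass F) (hp : p ∈ V N (k + 1)) :
    ∑ q ∈ U N (k + 1) p, (potential F q - potential F p) = levelSource F k p := by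
  have hN : (N : ℝ) ≠ 0 := Nat.cast_ne_zero.2 (Fin.pos (p 0)).ne'
  calc ∑ q ∈ U N (k + 1) p, (potential F q - potential F p)
      = ∑ c, (levelSource F k p - levelSource F k (constTail (k + 1) p c)) / N := by
        rw [sum_U_sub, sum_congr rfl fun c _ => hF.potential_constTail_sub hp c]
    _ = (N * levelSource F k p - 0) / N := by
        rw [← sum_div, sum_sub_distrib, hF.sum_levelSource_constTail, sum_const, card_univ,
          Fintype.card_fin, nsmul_eq_mul]
    _ = levelSource F k p := by rw [sub_zero, mul_div_cancel_left₀ _ hN]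

lemma H_potential (hF : IsCylinderMass F) (hp : p ∈ V N m) :
    H N m (potential F) p = F (m + 1) p - if p ∈ V N 0 then F 1 p else 0 := by
  induction m with
  | zero =>
    have hpot : ∀ q ∈ V N 0, potential F q = 0 := fun q hq => potential_eq_sum hq
    have hκ : kappa N p = 0 := Nat.le_zero.1 (kappa_le hp)
    have hsum : ∑ q ∈ U N 0 p, (potential F q - potential F p) = 0 := sum_eq_zero fun q hq => by
      rw [hpot q (mem_filter.1 hq).1, hpot p hp, sub_zero]
    rw [H, hκ, Icc_self, sum_singleton, hsum, if_pos hp, sub_self]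
  | succ m ih =>
    rw [H_succ hp, hF.sum_U_potential_sub hp, levelSource]
    by_cases h : p ∈ V N m
    · rw [ih h, if_pos ((mem_V_iff_of_mem_V_succ hp).1 h)]
      ring
    · have h0 : p ∉ V N 0 := fun h0 => h (V_mono m.zero_le h0)
      rw [H_eq_zero_of_notMem_V hp h, if_neg (mt (mem_V_iff_of_mem_V_succ hp).2 h), if_neg h0,
        zero_add]

lemma continuous_potential (hF : IsCylinderMass F) {b : ℕ → ℝ} (hb : Summable b)
    (hFb : ∀ m x, |F m x| ≤ b m) : Continuous (potential F) := by
  have hsource : ∀ k x, |levelSource F k x| ≤ b (k + 2) + b (k + 1) := fun k x => by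
    refine (abs_sub _ _).trans (add_le_add (hFb _ x) ?_)
    split_ifs
    · exact hFb _ x
    · simpa using (abs_nonneg _).trans (hFb (k + 1) x)
  refine continuous_tsum (u := fun k => 2 * (b (k + 2) + b (k + 1)) / N)
    (fun k => continuous_of_dependsOn (Set.finite_Iio _) (hF.dependsOn_levelPotential k)) ?_
    fun k x => ?_
  · have hb2 := (summable_nat_add_iff 2).2 hb
    have hb1 := (summable_nat_add_iff 1).2 hb
    exact ((hb2.add hb1).mul_left 2).div_const _
  · rw [levelPotential, Real.norm_eq_abs, abs_div, Nat.abs_cast, two_mul]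
    gcongr
    exact (abs_sub _ _).trans (add_le_add (hsource k _) (hsource k x))

end IsCylinderMass

end Potential

section Bernoulli

variable {N : ℕ} {μ : Measure (SSp N)} {f : SSp N → ℝ}

lemma measurableSet_cyl (m : ℕ) (p : SSp N) : MeasurableSet (cyl N m p) :=
  (PiNat.isOpen_cylinder (fun _ => Fin N) p m).measurableSet

lemma mem_cyl_succ_constTail {m : ℕ} {p x : SSp N} {c : Fin N} :
    x ∈ cyl N (m + 1) (constTail m p c) ↔ x ∈ cyl N m p ∧ x m = c := by
  simp only [cyl, Set.mem_ofPred_eq, Nat.forall_lt_succ_right, constTail_of_le le_rfl]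
  exact and_congr_left' (forall₂_congr fun i hi => by rw [constTail_of_lt hi])

lemma isCylinderMass_setIntegral (hf : Integrable f μ) :
    IsCylinderMass fun m p => ∫ x in cyl N m p, f x ∂μ where
  dependsOn m p q h := by
    have hcyl : cyl N m p = cyl N m q := by
      ext x
      exact forall₂_congr fun i hi => by rw [h i hi]
    simp only [hcyl]
  eq_sum m p := by
    have hsplit : cyl N m p = ⋃ c, cyl N (m + 1) (constTail m p c) := by
      ext x
      simp [mem_cyl_succ_constTail]
    have hdisj : Pairwise (Function.onFun Disjoint fun c => cyl N (m + 1) (constTail m p c)) :=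
      fun c d hcd => Set.disjoint_left.2 fun x hc hd =>
        hcd ((mem_cyl_succ_constTail.1 hc).2.symm.trans (mem_cyl_succ_constTail.1 hd).2)
    simp only [hsplit, integral_iUnion_fintype (fun _ => measurableSet_cyl _ _) hdisj
      fun _ => hf.integrableOn]

namespace IsBernoulli

lemma real_cyl (hμ : IsBernoulli N μ) (m : ℕ) (p : SSp N) :
    μ.real (cyl N m p) = (N : ℝ)⁻¹ ^ m := by
  simp [Measure.real, hμ m p]

lemma setAverage_cyl (hμ : IsBernoulli N μ) (m : ℕ) (p : SSp N) :
    ⨍ x in cyl N m p, f x ∂μ = (N : ℝ) ^ m * ∫ x in cyl N m p, f x ∂μ := by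
  rw [setAverage_eq, hμ.real_cyl, inv_pow, inv_inv, smul_eq_mul]

variable [IsFiniteMeasure μ]

lemma exists_forall_abs_setAverage_cyl_sub_lt (hμ : IsBernoulli N μ) (hf : Continuous f)
    {ε : ℝ} (hε : 0 < ε) :
    ∃ m₀, ∀ m ≥ m₀, ∀ p, |⨍ x in cyl N m p, f x ∂μ - f p| < ε := by
  obtain ⟨m₀, hm₀⟩ := exists_forall_mem_cylinder_dist_lt hf (half_pos hε)
  refine ⟨m₀, fun m hm p => lt_of_le_of_lt ?_ (half_lt_self hε)⟩
  have hfi : Integrable f μ := hf.integrable_of_hasCompactSupport (.of_compactSpace f)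
  have hne : μ (cyl N m p) ≠ 0 := by simp [hμ m p]
  have hmem : ∀ᵐ x ∂μ.restrict (cyl N m p), f x ∈ Metric.closedBall (f p) (ε / 2) :=
    ae_restrict_of_forall_mem (measurableSet_cyl m p) fun x hx => (hm₀ m hm p x hx).le
  exact (convex_closedBall _ _).set_average_mem Metric.isClosed_closedBall hne
    (measure_ne_top μ _) hmem hfi.integrableOn

lemma exists_summable_abs_setIntegral_cyl_le (hμ : IsBernoulli N μ) (hN : 2 ≤ N)
    (hf : Continuous f) :
    ∃ b : ℕ → ℝ, Summable b ∧ ∀ m p, |∫ x in cyl N m p, f x ∂μ| ≤ b m := by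
  obtain ⟨C, hC⟩ := isCompact_univ.exists_bound_of_continuousOn hf.continuousOn
  have hratio : (N : ℝ)⁻¹ < 1 := inv_lt_one_of_one_lt₀ (Nat.one_lt_cast.2 hN)
  refine ⟨fun m => C * (N : ℝ)⁻¹ ^ m,
    (summable_geometric_of_lt_one (by positivity) hratio).mul_left C, fun m p => ?_⟩
  beta_reduce
  rw [← hμ.real_cyl m p]
  exact norm_setIntegral_le_of_norm_le_const (measure_lt_top μ _) fun x _ => hC x trivial

end IsBernoulli

end Bernoulli

/-- Neumann boundary value problem: if `f` is continuous and
`ξ : V_0 → ℝ` satisfies `ξ(p) = ∫_{[p_1]} f dμ` for every `p ∈ V_0`, then there is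
`u ∈ 𝒟_0` with `Δu = f` and Neumann derivative `(du)(p) = ξ(p)` for all `p ∈ V_0`. -/
theorem statement19 (N : ℕ) (hN : 2 ≤ N)
    (μ : Measure (SSp N)) [IsProbabilityMeasure μ] (hμ : IsBernoulli N μ)
    (f : SSp N → ℝ) (hf : Continuous f) (ξ : SSp N → ℝ)
    (hξ : ∀ p ∈ V N 0, ξ p = ∫ x in cyl N 1 p, f x ∂μ) :
    ∃ u : SSp N → ℝ, IsLaplacianOn N 0 u f ∧
      ∀ p ∈ V N 0, Tendsto (fun m => -(H N m u p)) atTop (nhds (ξ p)) := by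
  have hfi : Integrable f μ := hf.integrable_of_hasCompactSupport (.of_compactSpace f)
  have hF := isCylinderMass_setIntegral hfi
  obtain ⟨b, hb, hFb⟩ := hμ.exists_summable_abs_setIntegral_cyl_le hN hf
  refine ⟨_, ⟨hF.continuous_potential hb hFb, hf, fun ε hε => ?_⟩, fun p hp => ?_⟩
  · obtain ⟨m₀, hm₀⟩ := hμ.exists_forall_abs_setAverage_cyl_sub_lt hf hε
    refine ⟨m₀, fun m hm p hp hp0 => ?_⟩
    rw [hF.H_potential hp, if_neg hp0, sub_zero, ← hμ.setAverage_cyl]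
    exact hm₀ (m + 1) (by omega) p
  · have hlim : Tendsto (fun m => ∫ x in cyl N m p, f x ∂μ) atTop (𝓝 0) :=
      squeeze_zero_norm (fun m => hFb m p) hb.tendsto_atTop_zero
    have hH : ∀ m, -H N m (potential fun m p => ∫ x in cyl N m p, f x ∂μ) p
        = ξ p - ∫ x in cyl N (m + 1) p, f x ∂μ := fun m => by
      rw [hF.H_potential (V_mono m.zero_le hp), if_pos hp, hξ p hp, neg_sub]
    simpa only [hH, sub_zero] using ((tendsto_add_atTop_iff_nat 1).2 hlim).const_sub (ξ p)
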